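/- Let G be a group and C a subgroup of G. Let Φ be the smallest collection of subsets of G that contains the underlying set of C and is closed under shifts (M ∈ Φ, u, v ∈ G implies uMv = {umv : m ∈ M} ∈ Φ) and under pairwise intersections. Then every nonempty D ∈ Φ has the form D = (⋂_{i=1}^{n} g_i⁻¹ C g_i)·h for some n ≥ 1 and elements g₁, …, g_n, h ∈ G. In particular, every nonempty member of Φ is a right coset of a finite intersection of conjugates of C. -/

import Mathlib

/-- The smallest collection of subsets of `G` containing (the carrier of) `C` and closed under
shifts `M ↦ uMv` and pairwise intersections. -/
inductive ShiftInterClosure {G : Type*} [Group G] (C : Subgroup G) : Set G → Prop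
  | base : ShiftInterClosure C (C : Set G)
  | shift (M : Set G) (u v : G) :
      ShiftInterClosure C M → ShiftInterClosure C ((fun m => u * m * v) '' M)
  | inter (M N : Set G) :
      ShiftInterClosure C M → ShiftInterClosure C N → ShiftInterClosure C (M ∩ N)

theorem shiftInter_aux {G : Type*} [Group G] (C : Subgroup G)
    (D : Set G) (hD : ShiftInterClosure C D) :
    ∃ n : ℕ, 1 ≤ n ∧ ∃ g : Fin n → G, ∀ h ∈ D, ∀ x,
      x ∈ D ↔ ∀ i, g i * (x * h⁻¹) * (g i)⁻¹ ∈ C := by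
  induction hD with
  | base =>
    refine ⟨1, le_rfl, fun _ => 1, fun h hh x => ?_⟩
    have hhC : h ∈ C := hh
    simp [Subgroup.mul_mem_cancel_right C (C.inv_mem hhC)]
  | shift M u v _ ih =>
    obtain ⟨n, hn, g, hg⟩ := ih
    refine ⟨n, hn, fun i => g i * u⁻¹, ?_⟩
    rintro _ ⟨k, hk, rfl⟩ x
    have hx : x ∈ (fun m => u * m * v) '' M ↔ u⁻¹ * x * v⁻¹ ∈ M := by
      constructor
      · rintro ⟨m, hm, rfl⟩
        simpa [mul_assoc] using hm
      · intro hm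
        exact ⟨_, hm, by simp [mul_assoc]⟩
    rw [hx, hg k hk]
    simp [mul_assoc]
  | inter M N _ _ ihM ihN =>
    obtain ⟨n, hn, g, hg⟩ := ihM
    obtain ⟨m, hm, gN, hgN⟩ := ihN
    refine ⟨n + m, by omega, Fin.append g gN, ?_⟩
    rintro h ⟨h1, h2⟩ x
    rw [Set.mem_inter_iff, hg h h1, hgN h h2]
    constructor
    · rintro ⟨a, b⟩ i
      refine Fin.addCases (fun i => ?_) (fun i => ?_) i
      · simpa using a i
      · simpa using b i
    · intro a
      exact ⟨fun i => by simpa using a (Fin.castAdd m i), fun i => by simpa using a (Fin.natAdd n i)⟩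

/-- Every nonempty member `D` of the closure of `C` under shifts and intersections has the form
`D = (⋂_{i=1}^{n} g_i⁻¹ C g_i) · h`: a right coset of a finite intersection of conjugates of
`C` (here `g⁻¹ C g = {y | g y g⁻¹ ∈ C}` is the comap of `C` under conjugation by `g`). -/
theorem shiftInterClosure_nonempty_eq_coset {G : Type*} [Group G] (C : Subgroup G)
    (D : Set G) (hD : ShiftInterClosure C D) (hne : D.Nonempty) :
    ∃ n : ℕ, 1 ≤ n ∧ ∃ (g : Fin n → G) (h : G),
      D = (fun x => x * h) ''
        ↑(⨅ i : Fin n, Subgroup.comap ((MulAut.conj (g i)).toMonoidHom) C) := by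
  obtain ⟨n, hn, g, hg⟩ := shiftInter_aux C D hD
  obtain ⟨h, hh⟩ := hne
  refine ⟨n, hn, g, h, ?_⟩
  ext x
  rw [hg h hh x]
  constructor
  · intro a
    refine ⟨x * h⁻¹, ?_, by simp⟩
    simpa [Subgroup.mem_iInf] using a
  · rintro ⟨y, hy, rfl⟩
    simpa [Subgroup.mem_iInf] using hy
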